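/- arXiv:1607.03128 — 5 statements merged into one kernel-verified Lean document; each statement's English description precedes it below -/
import Mathlib

section
/- Let N_T, N_R ∈ {2,3}, let H_RR be an N_R × N_T complex matrix of full rank (i.e., rank(H_RR) = min(N_R, N_T)), and let Q be a nonzero N_T × N_R complex matrix satisfying Q · H_RR · Q = 0. Then rank(Q) = 1. -/
/-!
If `A * B * C = 0`, then `A` kills the range of `B * C`, while `B` can shrink the range of `C` by at
most its own nullity; hence `rank A + rank B + rank C` is at most the sum of the two inner
dimensions. With `A = C = Q` this reads `2 * rank Q + rank H ≤ N_T + N_R`, and a full-rank `H` gives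
`2 * rank Q ≤ max N_T N_R ≤ 3`.
-/

section LinearMap

variable {K V W : Type*} [DivisionRing K] [AddCommGroup V] [Module K V] [AddCommGroup W]
  [Module K W]

theorem finrank_le_finrank_map_add_finrank_ker (f : V →ₗ[K] W) (p : Submodule K V)
    [FiniteDimensional K p] [FiniteDimensional K f.ker] :
    Module.finrank K p ≤ Module.finrank K (p.map f) + Module.finrank K f.ker := by
  have ker_map_le : (f.domRestrict p).ker.map p.subtype ≤ f.ker :=
    Submodule.map_le_iff_le_comap.mpr fun _ hx => hx
  calc Module.finrank K p
      = Module.finrank K (f.domRestrict p).range + Module.finrank K (f.domRestrict p).ker :=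
        (f.domRestrict p).finrank_range_add_finrank_ker.symm
    _ = Module.finrank K (p.map f) + Module.finrank K ((f.domRestrict p).ker.map p.subtype) := by
        rw [LinearMap.range_domRestrict, Submodule.finrank_map_subtype_eq]
    _ ≤ Module.finrank K (p.map f) + Module.finrank K f.ker :=
        Nat.add_le_add_left (Submodule.finrank_mono ker_map_le) _

end LinearMap

section Matrix

variable {l m n o R K : Type*} [Fintype n]

theorem matrix_rank_eq_zero_iff [CommRing R] [IsDomain R] {A : Matrix m n R} :
    A.rank = 0 ↔ A = 0 := by
  classical
  rw [Matrix.rank, Submodule.finrank_eq_zero, LinearMap.range_eq_bot, ← Matrix.toLin'_apply',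
    LinearEquiv.map_eq_zero_iff]

variable [Field K] [Fintype o]

/-- Sylvester's rank inequality. -/
theorem rank_add_rank_le_rank_mul_add_card (A : Matrix m n K) (B : Matrix n o K) :
    A.rank + B.rank ≤ (A * B).rank + Fintype.card n := by
  have rank_nullity : A.rank + Module.finrank K A.mulVecLin.ker = Fintype.card n := by
    rw [Matrix.rank, LinearMap.finrank_range_add_finrank_ker, Module.finrank_fintype_fun_eq_card]
  have rank_right_le : B.rank ≤ (A * B).rank + Module.finrank K A.mulVecLin.ker := by
    rw [Matrix.rank, Matrix.rank, Matrix.mulVecLin_mul, LinearMap.range_comp]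
    exact finrank_le_finrank_map_add_finrank_ker A.mulVecLin B.mulVecLin.range
  lia

theorem rank_add_rank_add_rank_le_of_mul_mul_eq_zero [Finite l] [Fintype m] {A : Matrix l m K}
    {B : Matrix m n K} {C : Matrix n o K} (h : A * B * C = 0) :
    A.rank + B.rank + C.rank ≤ Fintype.card m + Fintype.card n := by
  have outer : A.rank + (B * C).rank ≤ Fintype.card m :=
    Matrix.rank_add_rank_le_card_of_mul_eq_zero (by rwa [← Matrix.mul_assoc])
  have inner : B.rank + C.rank ≤ (B * C).rank + Fintype.card n :=
    rank_add_rank_le_rank_mul_add_card B C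
  lia

theorem stmt0_general [Fintype m] {H : Matrix n m K}
    (hH : Fintype.card m + Fintype.card n < H.rank + 4)
    {Q : Matrix m n K} (hQ : Q ≠ 0) (hZF : Q * H * Q = 0) : Q.rank = 1 := by
  have rank_ne_zero : Q.rank ≠ 0 := mt matrix_rank_eq_zero_iff.mp hQ
  have rank_bound : Q.rank + H.rank + Q.rank ≤ Fintype.card n + Fintype.card m :=
    rank_add_rank_add_rank_le_of_mul_mul_eq_zero hZF
  lia

end Matrix

/-- If `N_T, N_R ∈ {2,3}`, the residual self-interference channel `H_RR` has full rank,
and the nonzero amplification matrix `Q` satisfies the zero-forcing constraint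
`Q * H_RR * Q = 0`, then `Q` has rank one. -/
theorem stmt0 (N_T N_R : ℕ)
    (hT : N_T ∈ ({2, 3} : Set ℕ)) (hR : N_R ∈ ({2, 3} : Set ℕ))
    (H_RR : Matrix (Fin N_R) (Fin N_T) ℂ)
    (hfull : H_RR.rank = min N_R N_T)
    (Q : Matrix (Fin N_T) (Fin N_R) ℂ) (hQ : Q ≠ 0)
    (hZF : Q * H_RR * Q = 0) :
    Q.rank = 1 := by
  rw [Set.mem_insert_iff, Set.mem_singleton_iff] at hT hR
  exact stmt0_general (by rw [Fintype.card_fin, Fintype.card_fin, hfull]; lia) hQ hZF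
end

section
/- Let H_RD be an N_D × N_T complex matrix, H_SR an N_R × N_S complex matrix, V an N_S × d complex matrix, x_t ∈ ℂ^{N_T}, x_r ∈ ℂ^{N_R}, and let σ_R ≥ 0, σ_D > 0 be reals. Set Q = x_t x_r^H (rank-one). Then det( I + H_RD Q H_SR V V^H H_SR^H Q^H H_RD^H · (σ_R² H_RD Q Q^H H_RD^H + σ_D² I)^{-1} ) = 1 + (‖x_r^H H_SR V‖² · ‖H_RD x_t‖²) / (σ_R² ‖x_r‖² ‖H_RD x_t‖² + σ_D²). -/
open Matrix

/-!
Write `h = H_RD x_t`. Both the signal covariance and the relay-noise covariance are multiples of the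
rank-one matrix `h hᴴ`, so with `t = σ_R² ‖x_r‖²` and `s = σ_D²` the row vector `hᴴ` is a left
eigenvector of the total noise covariance `t h hᴴ + s I`, with eigenvalue `t ‖h‖² + s`, and hence of
its inverse. The matrix in the determinant is therefore a rank-one perturbation of `I`, and the
Weinstein–Aronszajn identity applies.
-/

section RankOne

variable {n K : Type*} [Fintype n] [DecidableEq n]

theorem det_one_add_vecMulVec [CommRing K] (u v : n → K) :
    det (1 + vecMulVec u v) = 1 + v ⬝ᵥ u := by
  rw [vecMulVec_eq Unit, det_one_add_replicateCol_mul_replicateRow]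

theorem vecMul_inv_of_vecMul_eq_smul [Field K] {B : Matrix n n K} (hB : IsUnit B.det) {c : K}
    (hc : c ≠ 0) {v : n → K} (hv : v ᵥ* B = c • v) : v ᵥ* B⁻¹ = c⁻¹ • v := by
  rw [eq_inv_smul_iff₀ hc, ← smul_vecMul, ← hv, vecMul_vecMul, mul_nonsing_inv B hB, vecMul_one]

theorem isUnit_det_smul_vecMulVec_add_smul_one [Field K] {t s : K} {u v : n → K} (hs : s ≠ 0)
    (hc : t * (v ⬝ᵥ u) + s ≠ 0) : IsUnit (t • vecMulVec u v + s • (1 : Matrix n n K)).det := by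
  have hfactor : t • vecMulVec u v + s • (1 : Matrix n n K)
      = s • (1 + vecMulVec ((t / s) • u) v) := by
    rw [smul_vecMulVec, smul_add, smul_smul, mul_div_cancel₀ t hs, add_comm]
  have hdet : 1 + v ⬝ᵥ (t / s) • u = (t * (v ⬝ᵥ u) + s) / s := by
    rw [dotProduct_smul, smul_eq_mul]
    field_simp
    ring
  rw [hfactor, det_smul, det_one_add_vecMulVec, hdet, isUnit_iff_ne_zero]
  exact mul_ne_zero (pow_ne_zero _ hs) (div_ne_zero hc hs)

theorem det_one_add_smul_vecMulVec_mul_inv [Field K] (a : K) {t s : K} {u v : n → K} (hs : s ≠ 0)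
    (hc : t * (v ⬝ᵥ u) + s ≠ 0) :
    det (1 + a • vecMulVec u v * (t • vecMulVec u v + s • 1)⁻¹)
      = 1 + a * (v ⬝ᵥ u) / (t * (v ⬝ᵥ u) + s) := by
  have heigen : v ᵥ* (t • vecMulVec u v + s • 1) = (t * (v ⬝ᵥ u) + s) • v := by
    rw [vecMul_add, vecMul_smul, vecMul_smul, vecMul_vecMulVec, vecMul_one, smul_smul, ← add_smul]
  have hinv : v ᵥ* (t • vecMulVec u v + s • 1)⁻¹ = (t * (v ⬝ᵥ u) + s)⁻¹ • v :=
    vecMul_inv_of_vecMul_eq_smul (isUnit_det_smul_vecMulVec_add_smul_one hs hc) hc heigen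
  rw [← smul_vecMulVec, vecMulVec_mul, hinv, det_one_add_vecMulVec, smul_dotProduct,
    dotProduct_smul, smul_eq_mul, smul_eq_mul, div_eq_inv_mul]

end RankOne

theorem vecMulVec_mul_conjTranspose_self {m n R : Type*} [Fintype n] [CommSemiring R] [StarMul R]
    (u : m → R) (v : n → R) :
    vecMulVec u v * (vecMulVec u v)ᴴ = (v ⬝ᵥ star v) • vecMulVec u (star u) := by
  rw [conjTranspose_vecMulVec, vecMulVec_mul_vecMulVec, vecMulVec_smul]

theorem dotProduct_star_self_eq_sum_norm_sq {n 𝕜 : Type*} [Fintype n] [RCLike 𝕜] (v : n → 𝕜) :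
    v ⬝ᵥ star v = ((∑ i, ‖v i‖ ^ 2 : ℝ) : 𝕜) := by
  simp only [dotProduct, Pi.star_apply, RCLike.star_def, RCLike.mul_conj, RCLike.ofReal_sum,
    RCLike.ofReal_pow]

theorem star_dotProduct_self_eq_sum_norm_sq {n 𝕜 : Type*} [Fintype n] [RCLike 𝕜] (v : n → 𝕜) :
    star v ⬝ᵥ v = ((∑ i, ‖v i‖ ^ 2 : ℝ) : 𝕜) := by
  rw [dotProduct_comm, dotProduct_star_self_eq_sum_norm_sq]

theorem stmt2_general {𝕜 D T R S d : Type*} [RCLike 𝕜] [Fintype D] [DecidableEq D] [Fintype T]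
    [Fintype R] [Fintype S] [Fintype d]
    (H_RD : Matrix D T 𝕜) (H_SR : Matrix R S 𝕜) (V : Matrix S d 𝕜) (x_t : T → 𝕜) (x_r : R → 𝕜)
    (σR σD : ℝ) (hσD : σD ≠ 0) (Q : Matrix T R 𝕜) (hQ : Q = vecMulVec x_t (star x_r)) :
    det (1 + H_RD * Q * H_SR * V * Vᴴ * H_SRᴴ * Qᴴ * H_RDᴴ *
        (((σR ^ 2 : ℝ) : 𝕜) • (H_RD * Q * Qᴴ * H_RDᴴ) + ((σD ^ 2 : ℝ) : 𝕜) • 1)⁻¹)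
      = ((1 + (∑ j, ‖(star x_r ᵥ* (H_SR * V)) j‖ ^ 2) * (∑ i, ‖(H_RD *ᵥ x_t) i‖ ^ 2) /
          (σR ^ 2 * (∑ i, ‖x_r i‖ ^ 2) * (∑ i, ‖(H_RD *ᵥ x_t) i‖ ^ 2) + σD ^ 2) : ℝ) : 𝕜) := by
  have hrelay : H_RD * Q = vecMulVec (H_RD *ᵥ x_t) (star x_r) := by rw [hQ, mul_vecMulVec]
  have hchannel : H_RD * Q * (H_SR * V) = vecMulVec (H_RD *ᵥ x_t) (star x_r ᵥ* (H_SR * V)) := by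
    rw [hrelay, vecMulVec_mul]
  have hsignal : H_RD * Q * H_SR * V * Vᴴ * H_SRᴴ * Qᴴ * H_RDᴴ
      = ((∑ j, ‖(star x_r ᵥ* (H_SR * V)) j‖ ^ 2 : ℝ) : 𝕜) •
        vecMulVec (H_RD *ᵥ x_t) (star (H_RD *ᵥ x_t)) := by
    rw [← dotProduct_star_self_eq_sum_norm_sq, ← vecMulVec_mul_conjTranspose_self, ← hchannel]
    simp only [conjTranspose_mul, Matrix.mul_assoc]
  have hnoise : H_RD * Q * Qᴴ * H_RDᴴ
      = ((∑ i, ‖x_r i‖ ^ 2 : ℝ) : 𝕜) • vecMulVec (H_RD *ᵥ x_t) (star (H_RD *ᵥ x_t)) := by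
    rw [Matrix.mul_assoc, ← conjTranspose_mul, hrelay, vecMulVec_mul_conjTranspose_self, star_star,
      star_dotProduct_self_eq_sum_norm_sq]
  have hpos : 0 < σR ^ 2 * (∑ i, ‖x_r i‖ ^ 2) * (∑ i, ‖(H_RD *ᵥ x_t) i‖ ^ 2) + σD ^ 2 := by
    positivity
  rw [hsignal, hnoise, smul_smul, det_one_add_smul_vecMulVec_mul_inv,
    star_dotProduct_self_eq_sum_norm_sq]
  · norm_cast
  · exact_mod_cast pow_ne_zero 2 hσD
  · rw [star_dotProduct_self_eq_sum_norm_sq]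
    exact_mod_cast hpos.ne'

/-- With a rank-one relay amplification matrix `Q = x_t x_rᴴ`, the end-to-end
achievable-rate determinant reduces to a scalar SINR expression. -/
theorem stmt2 (N_D N_T N_R N_S d : ℕ)
    (H_RD : Matrix (Fin N_D) (Fin N_T) ℂ)
    (H_SR : Matrix (Fin N_R) (Fin N_S) ℂ)
    (V : Matrix (Fin N_S) (Fin d) ℂ)
    (x_t : Fin N_T → ℂ) (x_r : Fin N_R → ℂ)
    (σR σD : ℝ) (hσR : 0 ≤ σR) (hσD : 0 < σD)
    (Q : Matrix (Fin N_T) (Fin N_R) ℂ)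
    (hQ : Q = Matrix.vecMulVec x_t (star x_r)) :
    Matrix.det (1 + H_RD * Q * H_SR * V * Vᴴ * H_SRᴴ * Qᴴ * H_RDᴴ *
        (((σR ^ 2 : ℝ) : ℂ) • (H_RD * Q * Qᴴ * H_RDᴴ) + ((σD ^ 2 : ℝ) : ℂ) • 1)⁻¹)
      = ((1 + (∑ j, ‖Matrix.vecMul (star x_r) (H_SR * V) j‖ ^ 2) *
            (∑ i, ‖H_RD.mulVec x_t i‖ ^ 2) /
          (σR ^ 2 * (∑ i, ‖x_r i‖ ^ 2) * (∑ i, ‖H_RD.mulVec x_t i‖ ^ 2) + σD ^ 2) : ℝ) : ℂ) := by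
  exact stmt2_general H_RD H_SR V x_t x_r σR σD hσD.ne' Q hQ
end

section
/- Let H be an N_D × 2 complex matrix, let v ∈ ℂ² be nonzero, and set Π = I − v v^H/‖v‖² (a 2 × 2 matrix). Then the largest eigenvalue of the Hermitian matrix H Π H^H equals Re(trace(H^H H)) − ‖H v‖²/‖v‖². -/
open Matrix

/-! The matrix `Π` is an orthogonal projection that annihilates `v ≠ 0`. In dimension two its rank
is therefore at most one, so `H Π Hᴴ` is positive semidefinite with at most one nonzero eigenvalue,
and its largest eigenvalue is its trace. -/

open scoped ComplexOrder

theorem iSup_eq_sum_of_support_subsingleton {ι : Type*} [Fintype ι] {f : ι → ℝ}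
    (hf : ∀ i, 0 ≤ f i) (hsupp : f.support.Subsingleton) : ⨆ i, f i = ∑ i, f i := by
  apply le_antisymm
  · exact Real.iSup_le (fun i ↦ Finset.single_le_sum (fun j _ ↦ hf j) (Finset.mem_univ i))
      (Finset.sum_nonneg fun i _ ↦ hf i)
  · obtain hzero | ⟨i, hi⟩ := f.support.eq_empty_or_nonempty
    · simp [Function.support_eq_empty_iff.mp hzero]
    · have hsum : ∑ j, f j = f i := Fintype.sum_eq_single i fun j hji ↦
        of_not_not fun hj ↦ hji (hsupp hj hi)
      exact hsum ▸ le_ciSup (Set.finite_range f).bddAbove i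

theorem rank_lt_card_of_mulVec_eq_zero {K m n : Type*} [Field K] [Fintype n]
    {A : Matrix m n K} {v : n → K} (hv : v ≠ 0) (hAv : A *ᵥ v = 0) :
    A.rank < Fintype.card n := by
  have hker : A.mulVecLin.ker ≠ ⊥ := (Submodule.ne_bot_iff _).mpr ⟨v, hAv, hv⟩
  have hker_pos : 0 < Module.finrank K A.mulVecLin.ker :=
    Nat.pos_of_ne_zero (mt Submodule.finrank_eq_zero.mp hker)
  have hrank_nullity : A.rank + Module.finrank K A.mulVecLin.ker = Fintype.card n := by
    rw [Matrix.rank, LinearMap.finrank_range_add_finrank_ker, Module.finrank_fintype_fun_eq_card]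
  lia

theorem mul_vecMulVec_star_mul_conjTranspose {R m n : Type*} [NonUnitalSemiring R] [StarRing R]
    [Fintype n] (H : Matrix m n R) (x : n → R) :
    H * vecMulVec x (star x) * Hᴴ = vecMulVec (H *ᵥ x) (star (H *ᵥ x)) := by
  rw [mul_vecMulVec, vecMulVec_mul, star_mulVec]

section

variable {𝕜 m n : Type*} [RCLike 𝕜] [Fintype n]

theorem iSup_eigenvalues_eq_re_trace_of_rank_le_one [DecidableEq n] {A : Matrix n n 𝕜}
    (hA : A.PosSemidef) (hrank : A.rank ≤ 1) :
    ⨆ i, hA.isHermitian.eigenvalues i = RCLike.re A.trace := by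
  rw [hA.isHermitian.rank_eq_card_non_zero_eigs, Fintype.card_le_one_iff_subsingleton] at hrank
  have hsupp : (Function.support hA.isHermitian.eigenvalues).Subsingleton :=
    Set.subsingleton_coe _ |>.mp hrank
  rw [iSup_eq_sum_of_support_subsingleton hA.eigenvalues_nonneg hsupp,
    hA.isHermitian.trace_eq_sum_eigenvalues, ← RCLike.ofReal_sum, RCLike.ofReal_re]

theorem dotProduct_self_star_eq_sum_norm_sq (x : n → 𝕜) :
    x ⬝ᵥ star x = ((∑ i, ‖x i‖ ^ 2 : ℝ) : 𝕜) := by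
  simp [dotProduct, RCLike.mul_conj]

variable [DecidableEq n]

/-- The matrix `I - v vᴴ / ‖v‖²` of the orthogonal projection onto the orthogonal complement of `v`,
written `Π` in the paper. The squared Euclidean norm is spelled out as a sum because the norm of
`n → 𝕜` is the supremum norm. For `v = 0` this is the identity, since `0⁻¹ = 0`. -/
noncomputable def orthComplProj (v : n → 𝕜) : Matrix n n 𝕜 :=
  1 - ((∑ i, ‖v i‖ ^ 2 : ℝ) : 𝕜)⁻¹ • vecMulVec v (star v)

theorem orthComplProj_mulVec_self (v : n → 𝕜) : orthComplProj v *ᵥ v = 0 := by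
  obtain rfl | hv := eq_or_ne v 0
  · exact mulVec_zero _
  have hnorm : star v ⬝ᵥ v ≠ 0 := mt dotProduct_star_self_eq_zero.mp hv
  rw [orthComplProj, ← dotProduct_self_star_eq_sum_norm_sq, dotProduct_comm v, sub_mulVec,
    one_mulVec, smul_mulVec, vecMulVec_mulVec, op_smul_eq_smul, inv_smul_smul₀ hnorm, sub_self]

theorem isHermitian_orthComplProj (v : n → 𝕜) : (orthComplProj v).IsHermitian := by
  simp [IsHermitian, orthComplProj, conjTranspose_sub, conjTranspose_smul,
    conjTranspose_vecMulVec, RCLike.star_def]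

theorem isIdempotentElem_orthComplProj (v : n → 𝕜) : IsIdempotentElem (orthComplProj v) := by
  have hannihilate : orthComplProj v * vecMulVec v (star v) = 0 := by
    rw [mul_vecMulVec, orthComplProj_mulVec_self, zero_vecMulVec]
  rw [IsIdempotentElem]
  nth_rw 2 [orthComplProj]
  rw [mul_sub, mul_one, Matrix.mul_smul, hannihilate, smul_zero, sub_zero]

theorem posSemidef_orthComplProj (v : n → 𝕜) : (orthComplProj v).PosSemidef := by
  have hgram : (orthComplProj v)ᴴ * orthComplProj v = orthComplProj v := by
    rw [isHermitian_orthComplProj, isIdempotentElem_orthComplProj]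
  exact hgram ▸ posSemidef_conjTranspose_mul_self (orthComplProj v)

theorem posSemidef_mul_orthComplProj_mul_conjTranspose [Finite m] (H : Matrix m n 𝕜) (v : n → 𝕜) :
    (H * orthComplProj v * Hᴴ).PosSemidef :=
  (posSemidef_orthComplProj v).mul_mul_conjTranspose_same H

theorem rank_mul_orthComplProj_mul_lt_card {l : Type*} [Fintype l] (H : Matrix m n 𝕜)
    {v : n → 𝕜} (hv : v ≠ 0) (B : Matrix n l 𝕜) :
    (H * orthComplProj v * B).rank < Fintype.card n :=
  calc (H * orthComplProj v * B).rank
      ≤ (H * orthComplProj v).rank := rank_mul_le_left _ _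
    _ ≤ (orthComplProj v).rank := rank_mul_le_right _ _
    _ < Fintype.card n := rank_lt_card_of_mulVec_eq_zero hv (orthComplProj_mulVec_self v)

theorem re_trace_mul_orthComplProj_mul_conjTranspose [Fintype m] (H : Matrix m n 𝕜)
    (v : n → 𝕜) :
    RCLike.re (H * orthComplProj v * Hᴴ).trace =
      RCLike.re (Hᴴ * H).trace - (∑ i, ‖(H *ᵥ v) i‖ ^ 2) / ∑ i, ‖v i‖ ^ 2 := by
  have htrace : (H * orthComplProj v * Hᴴ).trace =
      (Hᴴ * H).trace - (((∑ i, ‖(H *ᵥ v) i‖ ^ 2) / ∑ i, ‖v i‖ ^ 2 : ℝ) : 𝕜) := by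
    rw [orthComplProj, Matrix.mul_sub, Matrix.sub_mul, Matrix.mul_one, Matrix.mul_smul,
      Matrix.smul_mul, mul_vecMulVec_star_mul_conjTranspose, trace_sub, trace_smul,
      trace_vecMulVec, dotProduct_self_star_eq_sum_norm_sq, trace_mul_comm H, smul_eq_mul,
      ← div_eq_inv_mul, RCLike.ofReal_div]
  rw [htrace, map_sub, RCLike.ofReal_re]

theorem stmt7_general [Fintype m] [DecidableEq m] (hn : Fintype.card n ≤ 2)
    (H : Matrix m n 𝕜) {v : n → 𝕜} (hv : v ≠ 0) :
    ⨆ i, (posSemidef_mul_orthComplProj_mul_conjTranspose H v).isHermitian.eigenvalues i =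
      RCLike.re (Hᴴ * H).trace - (∑ i, ‖(H *ᵥ v) i‖ ^ 2) / ∑ i, ‖v i‖ ^ 2 := by
  have hrank : (H * orthComplProj v * Hᴴ).rank ≤ 1 :=
    Nat.le_of_lt_succ ((rank_mul_orthComplProj_mul_lt_card H hv Hᴴ).trans_le hn)
  have hpos := posSemidef_mul_orthComplProj_mul_conjTranspose H v
  rw [iSup_eigenvalues_eq_re_trace_of_rank_le_one hpos hrank,
    re_trace_mul_orthComplProj_mul_conjTranspose]

end

/-- For `N_T = 2`, the largest eigenvalue of `H Π Hᴴ`, where `Π = I - v vᴴ / ‖v‖²`,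
equals `Re (trace (Hᴴ H)) - ‖H v‖² / ‖v‖²`. -/
theorem stmt7 (N_D : ℕ) (H : Matrix (Fin N_D) (Fin 2) ℂ)
    (v : Fin 2 → ℂ) (hv : v ≠ 0)
    (Pi : Matrix (Fin 2) (Fin 2) ℂ)
    (hPi : Pi = 1 - (((∑ i, ‖v i‖ ^ 2 : ℝ) : ℂ))⁻¹ • Matrix.vecMulVec v (star v))
    (hC : (H * Pi * Hᴴ).IsHermitian) :
    (⨆ i, hC.eigenvalues i)
      = (Matrix.trace (Hᴴ * H)).re - (∑ i, ‖H.mulVec v i‖ ^ 2) / (∑ i, ‖v i‖ ^ 2) := by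
  subst hPi
  exact stmt7_general (Fintype.card_fin 2).le H hv
end

section
/- Let Q be an N_T × N_R complex matrix and H an N_R × N_T complex matrix. Define f(R) = ‖R^H Q‖² + ‖R^H − Q H‖² for N_T × N_T complex matrices R, where ‖·‖ is the Frobenius norm. Then R* = (I + Q Q^H)^{-1} H^H Q^H is the unique global minimizer of f: for every R ≠ R*, f(R) > f(R*). -/
open Matrix

theorem posDef_one_add_mul_conjTranspose {m n K : Type*} [Fintype m] [Finite n] [DecidableEq n]
    [Ring K] [PartialOrder K] [StarRing K] [StarOrderedRing K] [NoZeroDivisors K]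
    (Q : Matrix n m K) : (1 + Q * Qᴴ).PosDef :=
  PosDef.one.add_posSemidef (posSemidef_self_mul_conjTranspose Q)

theorem conjTranspose_inv_mul_conjTranspose_mul_cancel {n p K : Type*} [Fintype n] [DecidableEq n]
    [CommRing K] [StarRing K] {S : Matrix n n K} (hS : S.IsHermitian) (hunit : IsUnit S)
    (C : Matrix p n K) : (S⁻¹ * Cᴴ)ᴴ * S = C := by
  rw [conjTranspose_mul, conjTranspose_conjTranspose, conjTranspose_nonsing_inv, hS.eq,
    nonsing_inv_mul_cancel_right _ _ ((isUnit_iff_isUnit_det S).1 hunit)]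

section Tikhonov

open scoped Matrix.Norms.Frobenius

variable {m n p : Type*} [Fintype m] [Fintype n] [Fintype p]

theorem frobenius_norm_sq {α : Type*} [SeminormedAddCommGroup α] (A : Matrix m n α) :
    ‖A‖ ^ 2 = ∑ i, ∑ j, ‖A i j‖ ^ 2 := by
  simp only [frobenius_norm_def, Real.rpow_two, ← Real.sqrt_eq_rpow]
  exact Real.sq_sqrt (by positivity)

variable {𝕜 : Type*} [RCLike 𝕜]

theorem frobenius_norm_add_sq (A B : Matrix m n 𝕜) :
    ‖A + B‖ ^ 2 = ‖A‖ ^ 2 + 2 * RCLike.re (A * Bᴴ).trace + ‖B‖ ^ 2 := by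
  have entrywise (a b : 𝕜) : ‖a + b‖ ^ 2 = ‖a‖ ^ 2 + 2 * RCLike.re (a * star b) + ‖b‖ ^ 2 := by
    simpa [RCLike.inner_apply, mul_comm] using norm_add_sq (𝕜 := 𝕜) a b
  simp only [frobenius_norm_sq, Matrix.add_apply, entrywise, trace, diag_apply, mul_apply,
    conjTranspose_apply, map_sum, Finset.mul_sum, Finset.sum_add_distrib]

/-- The Tikhonov-regularized least-squares objective `‖X Q‖² + ‖X - C‖²` in Frobenius norms.
The unknown is `X = Rᴴ` in the notation of `stmt11`, whose target is `C = Q H`. -/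
noncomputable def tikhonovLoss (Q : Matrix n m 𝕜) (C X : Matrix p n 𝕜) : ℝ :=
  ‖X * Q‖ ^ 2 + ‖X - C‖ ^ 2

theorem tikhonovLoss_zero_pos (Q : Matrix n m 𝕜) {X : Matrix p n 𝕜} (hX : X ≠ 0) :
    0 < tikhonovLoss Q 0 X := by
  rw [tikhonovLoss, sub_zero]
  have : 0 < ‖X‖ := norm_pos_iff.2 hX
  positivity

variable [DecidableEq n]

theorem tikhonovLoss_add_of_mul_eq {Q : Matrix n m 𝕜} {C X₀ : Matrix p n 𝕜}
    (hX₀ : X₀ * (1 + Q * Qᴴ) = C) (D : Matrix p n 𝕜) :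
    tikhonovLoss Q C (X₀ + D) = tikhonovLoss Q C X₀ + tikhonovLoss Q 0 D := by
  -- The trace of the left side has half the derivative of the loss at `X₀` along `D` as real part.
  have cross : X₀ * Q * (D * Q)ᴴ + (X₀ - C) * Dᴴ = 0 := by
    calc X₀ * Q * (D * Q)ᴴ + (X₀ - C) * Dᴴ
        = (X₀ * (1 + Q * Qᴴ) - C) * Dᴴ := by
          simp only [conjTranspose_mul, Matrix.mul_add, Matrix.mul_one, Matrix.add_mul,
            Matrix.sub_mul, Matrix.mul_assoc]
          abel
      _ = 0 := by rw [hX₀, sub_self, Matrix.zero_mul]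
  have cross_re : RCLike.re (X₀ * Q * (D * Q)ᴴ).trace + RCLike.re ((X₀ - C) * Dᴴ).trace = 0 := by
    rw [← map_add, ← trace_add, cross, trace_zero, map_zero]
  simp only [tikhonovLoss, Matrix.add_mul, add_sub_right_comm, frobenius_norm_add_sq, sub_zero]
  linarith

theorem tikhonovLoss_lt_of_mul_eq {Q : Matrix n m 𝕜} {C X₀ X : Matrix p n 𝕜}
    (hX₀ : X₀ * (1 + Q * Qᴴ) = C) (hX : X ≠ X₀) :
    tikhonovLoss Q C X₀ < tikhonovLoss Q C X := by
  rw [← add_sub_cancel X₀ X, tikhonovLoss_add_of_mul_eq hX₀]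
  exact lt_add_of_pos_right _ (tikhonovLoss_zero_pos Q (sub_ne_zero.2 hX))

open scoped ComplexOrder in
theorem stmt11_general (Q : Matrix n m 𝕜) (C : Matrix p n 𝕜) (R : Matrix n p 𝕜)
    (hR : R ≠ (1 + Q * Qᴴ)⁻¹ * Cᴴ) :
    tikhonovLoss Q C ((1 + Q * Qᴴ)⁻¹ * Cᴴ)ᴴ < tikhonovLoss Q C Rᴴ := by
  have hS : (1 + Q * Qᴴ).PosDef := posDef_one_add_mul_conjTranspose Q
  have normal_eq : ((1 + Q * Qᴴ)⁻¹ * Cᴴ)ᴴ * (1 + Q * Qᴴ) = C :=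
    conjTranspose_inv_mul_conjTranspose_mul_cancel hS.isHermitian hS.isUnit C
  exact tikhonovLoss_lt_of_mul_eq normal_eq (conjTranspose_injective.ne hR)

end Tikhonov

/-- `R* = (I + Q Qᴴ)⁻¹ Hᴴ Qᴴ` is the unique global minimizer of
`f(R) = ‖Rᴴ Q‖² + ‖Rᴴ - Q H‖²` (Frobenius norms). -/
theorem stmt11 (N_T N_R : ℕ)
    (Q : Matrix (Fin N_T) (Fin N_R) ℂ) (H : Matrix (Fin N_R) (Fin N_T) ℂ)
    (f : Matrix (Fin N_T) (Fin N_T) ℂ → ℝ)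
    (hf : ∀ R : Matrix (Fin N_T) (Fin N_T) ℂ,
      f R = (∑ i, ∑ j, ‖(Rᴴ * Q) i j‖ ^ 2) + (∑ i, ∑ j, ‖(Rᴴ - Q * H) i j‖ ^ 2))
    (Rstar : Matrix (Fin N_T) (Fin N_T) ℂ)
    (hRstar : Rstar = (1 + Q * Qᴴ)⁻¹ * Hᴴ * Qᴴ) :
    ∀ R : Matrix (Fin N_T) (Fin N_T) ℂ, R ≠ Rstar → f Rstar < f R := by
  rw [Matrix.mul_assoc, ← conjTranspose_mul] at hRstar
  subst hRstar
  simpa only [hf, tikhonovLoss, frobenius_norm_sq] using stmt11_general Q (Q * H)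
end

section
/- Let H be an N_D × N_T complex matrix, S an N_T × d complex matrix, Q an N_T × N_R complex matrix, and σ_R ≥ 0, σ_D > 0 reals. Let N = σ_R² H Q Q^H H^H + σ_D² I (Hermitian positive definite) and R = log det( I + H S S^H H^H N^{-1} ) (a positive real number). For an N_D × d complex matrix U and a d × d Hermitian positive definite complex matrix W, define E(U) = (I − U^H H S)(I − U^H H S)^H + σ_R² U^H H Q Q^H H^H U + σ_D² U^H U and Φ(U, W) = log det(W) − Re(trace(W · E(U))) + d. Then sup over all such (U, W) of Φ(U, W) equals R, and the supremum is attained. -/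
open Matrix
open scoped ComplexOrder

/-!
Write `G = H S`, let `A = N + G Gᴴ` be the covariance of the received signal, and let
`M = 1 + Gᴴ N⁻¹ G`. Completing the square in `U` and using the Woodbury identity
`M⁻¹ = 1 - Gᴴ A⁻¹ G` gives `E(U) = M⁻¹ + (U - A⁻¹ G)ᴴ A (U - A⁻¹ G)`, so for every `W` the
surrogate is largest at the Wiener filter `U = A⁻¹ G`, where it equals
`log det W - Re (trace (W M⁻¹)) + d`. Applying `log x ≤ x - 1` to the eigenvalues of a Hermitian
matrix similar to `W M⁻¹` bounds this by `log det M`, with equality at `W = M`. Finally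
`det M = det (1 + G Gᴴ N⁻¹)` by the Weinstein–Aronszajn identity.
-/

variable {𝕜 m n : Type*} [RCLike 𝕜]

section LogDet

variable [Fintype n] {A B : Matrix n n 𝕜}

/-- The log-determinant of a matrix whose determinant is a positive real, such as a positive
definite matrix or a product of two of them. The real part serves only to land in `ℝ`; for other
determinants the value has no meaning. -/
noncomputable def logDet [DecidableEq n] (A : Matrix n n 𝕜) : ℝ :=
  Real.log (RCLike.re A.det)

open scoped MatrixOrder in
lemma trace_mul_nonneg (hA : A.PosSemidef) (hB : B.PosSemidef) : 0 ≤ (A * B).trace := by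
  classical
  obtain ⟨C, rfl⟩ := CStarAlgebra.nonneg_iff_eq_star_mul_self.mp hA.nonneg
  rw [Matrix.mul_assoc, trace_mul_comm]
  exact (hB.mul_mul_conjTranspose_same C).trace_nonneg

variable [DecidableEq n]

lemma re_det_pos (hA : A.PosDef) : 0 < RCLike.re A.det :=
  (RCLike.pos_iff.mp hA.det_pos).1

lemma logDet_mul (hA : A.PosDef) (hB : B.PosDef) : logDet (A * B) = logDet A + logDet B := by
  have him : RCLike.im A.det = 0 := (RCLike.pos_iff.mp hA.det_pos).2
  simp only [logDet]
  rw [det_mul, RCLike.mul_re, him, zero_mul, sub_zero,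
    Real.log_mul (re_det_pos hA).ne' (re_det_pos hB).ne']

lemma logDet_inv (hA : A.PosDef) : logDet A⁻¹ = -logDet A := by
  have h := logDet_mul hA hA.inv
  rw [mul_nonsing_inv A hA.det_pos.ne'.isUnit, logDet, det_one, RCLike.one_re, Real.log_one] at h
  exact (neg_eq_of_add_eq_zero_right h.symm).symm

lemma logDet_le_re_trace_sub_card (hA : A.PosDef) :
    logDet A ≤ RCLike.re A.trace - Fintype.card n := by
  have hdet : RCLike.re A.det = ∏ i, hA.1.eigenvalues i := by
    rw [hA.1.det_eq_prod_eigenvalues, ← RCLike.ofReal_prod, RCLike.ofReal_re]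
  have htrace : RCLike.re A.trace = ∑ i, hA.1.eigenvalues i := by
    rw [hA.1.trace_eq_sum_eigenvalues, ← RCLike.ofReal_sum, RCLike.ofReal_re]
  calc logDet A = ∑ i, Real.log (hA.1.eigenvalues i) := by
        rw [logDet, hdet, Real.log_prod fun i _ => (hA.eigenvalues_pos i).ne']
    _ ≤ ∑ i, (hA.1.eigenvalues i - 1) :=
        Finset.sum_le_sum fun i _ => Real.log_le_sub_one_of_pos (hA.eigenvalues_pos i)
    _ = RCLike.re A.trace - Fintype.card n := by simp [htrace]

open scoped MatrixOrder in
lemma logDet_mul_le_re_trace_sub_card (hA : A.PosDef) (hB : B.PosDef) :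
    logDet (A * B) ≤ RCLike.re (A * B).trace - Fintype.card n := by
  -- `A * B` need not be Hermitian; with `B = Cᴴ C` it is similar to `C A Cᴴ`, which is.
  obtain ⟨C, hC, rfl⟩ := CStarAlgebra.isStrictlyPositive_iff_eq_star_mul_self.mp
    hB.isStrictlyPositive
  have hconj : (C * A * Cᴴ).PosDef := (IsUnit.posDef_star_right_conjugate_iff hC).mpr hA
  have hdet : (A * (star C * C)).det = (C * A * Cᴴ).det := by
    rw [← Matrix.mul_assoc, det_mul_comm, ← Matrix.mul_assoc, star_eq_conjTranspose]
  have htrace : (A * (star C * C)).trace = (C * A * Cᴴ).trace := by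
    rw [← Matrix.mul_assoc, trace_mul_comm, ← Matrix.mul_assoc, star_eq_conjTranspose]
  simpa only [logDet, hdet, htrace] using logDet_le_re_trace_sub_card hconj

end LogDet

lemma conjTranspose_sub_inv_mul_mul_mul_sub {R : Type*} [CommRing R] [StarRing R] [Fintype m]
    [DecidableEq m] {A : Matrix m m R} (hA : A.IsHermitian) (hAu : IsUnit A) (G U : Matrix m n R) :
    (U - A⁻¹ * G)ᴴ * A * (U - A⁻¹ * G) = Uᴴ * A * U - Uᴴ * G - Gᴴ * U + Gᴴ * A⁻¹ * G := by
  have hdet : IsUnit A.det := (isUnit_iff_isUnit_det A).mp hAu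
  have hleft : (U - A⁻¹ * G)ᴴ * A = Uᴴ * A - Gᴴ := by
    rw [conjTranspose_sub, conjTranspose_mul, hA.inv.eq, Matrix.sub_mul,
      nonsing_inv_mul_cancel_right _ _ hdet]
  rw [hleft, Matrix.mul_sub, Matrix.sub_mul, Matrix.sub_mul, Matrix.mul_assoc Uᴴ A (A⁻¹ * G),
    mul_nonsing_inv_cancel_left _ _ hdet, Matrix.mul_assoc Gᴴ]
  abel

lemma posDef_smul_mul_conjTranspose_add_smul_one [Finite m] [DecidableEq m] [Fintype n]
    {a b : 𝕜} (ha : 0 ≤ a) (hb : 0 < b) (B : Matrix m n 𝕜) : (a • (B * Bᴴ) + b • 1).PosDef :=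
  PosDef.posSemidef_add ((posSemidef_self_mul_conjTranspose B).smul ha) (PosDef.one.smul hb)

section MSE

variable [Fintype m] [DecidableEq m] [DecidableEq n] {N : Matrix m m 𝕜}

/-- The optimal weight of the WMMSE surrogate: the inverse of the smallest mean-square error
matrix, see `mseMatrix_eq_inv_mmseWeight_add`. -/
noncomputable def mmseWeight (N : Matrix m m 𝕜) (G : Matrix m n 𝕜) : Matrix n n 𝕜 :=
  1 + Gᴴ * N⁻¹ * G

lemma posDef_mmseWeight [Finite n] (hN : N.PosDef) (G : Matrix m n 𝕜) :
    (mmseWeight N G).PosDef :=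
  PosDef.one.add_posSemidef (hN.inv.posSemidef.conjTranspose_mul_mul_same G)

variable [Fintype n]

/-- The Wiener filter, the linear receiver that minimizes the mean-square error matrix. -/
noncomputable def wienerFilter (N : Matrix m m 𝕜) (G : Matrix m n 𝕜) : Matrix m n 𝕜 :=
  (N + G * Gᴴ)⁻¹ * G

/-- The mean-square error matrix of the receive filter `U` for a unit-covariance signal sent
through the channel `G` and received in noise of covariance `N`. -/
def mseMatrix (N : Matrix m m 𝕜) (G U : Matrix m n 𝕜) : Matrix n n 𝕜 :=
  (1 - Uᴴ * G) * (1 - Uᴴ * G)ᴴ + Uᴴ * N * U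

/-- The WMMSE surrogate `Φ(U, W)` of the rate of the channel `G` with noise covariance `N`. -/
noncomputable def wmmseSurrogate (N : Matrix m m 𝕜) (G U : Matrix m n 𝕜) (W : Matrix n n 𝕜) : ℝ :=
  logDet W - RCLike.re (W * mseMatrix N G U).trace + Fintype.card n

lemma mseMatrix_smul_add_smul_one (a b : 𝕜) (K : Matrix m m 𝕜) (G U : Matrix m n 𝕜) :
    mseMatrix (a • K + b • 1) G U =
      (1 - Uᴴ * G) * (1 - Uᴴ * G)ᴴ + a • (Uᴴ * K * U) + b • (Uᴴ * U) := by
  simp only [mseMatrix, Matrix.mul_add, Matrix.add_mul, Matrix.mul_smul, Matrix.smul_mul,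
    Matrix.mul_one, add_assoc]

lemma det_mmseWeight (N : Matrix m m 𝕜) (G : Matrix m n 𝕜) :
    (mmseWeight N G).det = (1 + G * Gᴴ * N⁻¹).det := by
  rw [mmseWeight, ← det_one_add_mul_comm, Matrix.mul_assoc]

lemma inv_mmseWeight (hN : N.PosDef) (G : Matrix m n 𝕜) :
    (mmseWeight N G)⁻¹ = 1 - Gᴴ * (N + G * Gᴴ)⁻¹ * G := by
  have hNinv : N⁻¹⁻¹ = N := nonsing_inv_nonsing_inv N hN.det_pos.ne'.isUnit
  have hA : (N + G * Gᴴ).PosDef := hN.add_posSemidef (posSemidef_self_mul_conjTranspose G)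
  have hunit : IsUnit (N⁻¹⁻¹ + G * (1 : Matrix n n 𝕜)⁻¹ * Gᴴ) := by
    simpa only [hNinv, inv_one, Matrix.mul_one] using hA.isUnit
  simpa only [mmseWeight, hNinv, inv_one, Matrix.mul_one, Matrix.one_mul] using
    add_mul_mul_inv_eq_sub 1 Gᴴ N⁻¹ G isUnit_one hN.inv.isUnit hunit

lemma mseMatrix_eq_inv_mmseWeight_add (hN : N.PosDef) (G U : Matrix m n 𝕜) :
    mseMatrix N G U = (mmseWeight N G)⁻¹ +
      (U - wienerFilter N G)ᴴ * (N + G * Gᴴ) * (U - wienerFilter N G) := by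
  have hA : (N + G * Gᴴ).PosDef := hN.add_posSemidef (posSemidef_self_mul_conjTranspose G)
  rw [inv_mmseWeight hN, wienerFilter, conjTranspose_sub_inv_mul_mul_mul_sub hA.1 hA.isUnit]
  simp only [mseMatrix, conjTranspose_sub, conjTranspose_one, conjTranspose_mul,
    conjTranspose_conjTranspose, Matrix.sub_mul, Matrix.mul_sub, Matrix.add_mul, Matrix.mul_add,
    Matrix.mul_assoc, Matrix.one_mul, Matrix.mul_one]
  abel

lemma mseMatrix_wienerFilter (hN : N.PosDef) (G : Matrix m n 𝕜) :
    mseMatrix N G (wienerFilter N G) = (mmseWeight N G)⁻¹ := by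
  rw [mseMatrix_eq_inv_mmseWeight_add hN, sub_self, Matrix.mul_zero, add_zero]

lemma wmmseSurrogate_le_wienerFilter (hN : N.PosDef) (G U : Matrix m n 𝕜) {W : Matrix n n 𝕜}
    (hW : W.PosSemidef) :
    wmmseSurrogate N G U W ≤ wmmseSurrogate N G (wienerFilter N G) W := by
  have hA : (N + G * Gᴴ).PosSemidef :=
    hN.posSemidef.add (posSemidef_self_mul_conjTranspose G)
  have hexcess := (RCLike.nonneg_iff.mp <|
    trace_mul_nonneg hW (hA.conjTranspose_mul_mul_same (U - wienerFilter N G))).1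
  rw [wmmseSurrogate, wmmseSurrogate, mseMatrix_wienerFilter hN,
    mseMatrix_eq_inv_mmseWeight_add hN, Matrix.mul_add, trace_add, map_add]
  linarith

lemma wmmseSurrogate_le_logDet_mmseWeight (hN : N.PosDef) (G U : Matrix m n 𝕜)
    {W : Matrix n n 𝕜} (hW : W.PosDef) :
    wmmseSurrogate N G U W ≤ logDet (mmseWeight N G) := by
  have hM := posDef_mmseWeight hN G
  have hlog := logDet_mul_le_re_trace_sub_card hW hM.inv
  rw [logDet_mul hW hM.inv, logDet_inv hM] at hlog
  refine (wmmseSurrogate_le_wienerFilter hN G U hW.posSemidef).trans ?_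
  rw [wmmseSurrogate, mseMatrix_wienerFilter hN]
  linarith

lemma wmmseSurrogate_wienerFilter_mmseWeight (hN : N.PosDef) (G : Matrix m n 𝕜) :
    wmmseSurrogate N G (wienerFilter N G) (mmseWeight N G) = logDet (mmseWeight N G) := by
  have hunit : IsUnit (mmseWeight N G).det := (posDef_mmseWeight hN G).det_pos.ne'.isUnit
  rw [wmmseSurrogate, mseMatrix_wienerFilter hN, mul_nonsing_inv _ hunit, trace_one,
    RCLike.natCast_re, sub_add_cancel]

theorem stmt14_general (hN : N.PosDef) (G : Matrix m n 𝕜) :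
    IsGreatest {r : ℝ | ∃ U W, W.PosDef ∧ r = wmmseSurrogate N G U W}
      (logDet (1 + G * Gᴴ * N⁻¹)) := by
  have hrate : logDet (1 + G * Gᴴ * N⁻¹) = logDet (mmseWeight N G) := by
    rw [logDet, logDet, det_mmseWeight]
  rw [hrate]
  refine ⟨⟨wienerFilter N G, mmseWeight N G, posDef_mmseWeight hN G,
    (wmmseSurrogate_wienerFilter_mmseWeight hN G).symm⟩, ?_⟩
  rintro r ⟨U, W, hW, rfl⟩
  exact wmmseSurrogate_le_logDet_mmseWeight hN G U hW

end MSE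

/-- WMMSE identity: the supremum of the surrogate
`Φ(U, W) = log det W - Re (trace (W E(U))) + d` over receive filters `U` and Hermitian
positive definite weights `W` is attained and equals the achievable rate
`R = log det (I + H S Sᴴ Hᴴ N⁻¹)` with `N = σ_R² H Q Qᴴ Hᴴ + σ_D² I`. -/
theorem stmt14 (N_D N_T N_R d : ℕ)
    (H : Matrix (Fin N_D) (Fin N_T) ℂ)
    (S : Matrix (Fin N_T) (Fin d) ℂ)
    (Q : Matrix (Fin N_T) (Fin N_R) ℂ)
    (σR σD : ℝ) (hσR : 0 ≤ σR) (hσD : 0 < σD)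
    (Nm : Matrix (Fin N_D) (Fin N_D) ℂ)
    (hNm : Nm = ((σR ^ 2 : ℝ) : ℂ) • (H * Q * Qᴴ * Hᴴ) + ((σD ^ 2 : ℝ) : ℂ) • 1)
    (E : Matrix (Fin N_D) (Fin d) ℂ → Matrix (Fin d) (Fin d) ℂ)
    (hE : ∀ U : Matrix (Fin N_D) (Fin d) ℂ,
      E U = (1 - Uᴴ * H * S) * (1 - Uᴴ * H * S)ᴴ
        + ((σR ^ 2 : ℝ) : ℂ) • (Uᴴ * H * Q * Qᴴ * Hᴴ * U)
        + ((σD ^ 2 : ℝ) : ℂ) • (Uᴴ * U)) :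
    IsGreatest
      { r : ℝ | ∃ (U : Matrix (Fin N_D) (Fin d) ℂ) (W : Matrix (Fin d) (Fin d) ℂ),
          W.PosDef ∧ r = Real.log (W.det.re) - (Matrix.trace (W * E U)).re + d }
      (Real.log ((Matrix.det (1 + H * S * Sᴴ * Hᴴ * Nm⁻¹)).re)) := by
  have hN : Nm.PosDef := by
    simpa only [hNm, conjTranspose_mul, Matrix.mul_assoc] using
      posDef_smul_mul_conjTranspose_add_smul_one (Complex.zero_le_real.mpr (sq_nonneg σR))
        (Complex.zero_lt_real.mpr (pow_pos hσD 2)) (H * Q)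
  simpa only [hNm, hE, wmmseSurrogate, mseMatrix_smul_add_smul_one, logDet, conjTranspose_mul,
    Matrix.mul_assoc, Fintype.card_fin, RCLike.re_eq_complex_re] using stmt14_general hN (H * S)
end
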